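/- Let (A, μ) be an associative algebra over a field K, and let r = r¹⊗r², s = s¹⊗s² ∈ A⊗A (summation understood) satisfy r₁₃r₁₂ − r₁₂r₂₃ + s₂₃r₁₃ = 0 and s₁₃r₁₂ − s₁₂s₂₃ + s₂₃s₁₃ = 0 in A⊗A⊗A, where r₁₂s₂₃ = r¹⊗r²s¹⊗s², r₁₃s₁₂ = r¹s¹⊗s²⊗r², r₂₃s₁₃ = s¹⊗r¹⊗r²s². Define R, S : A → A by R(a) = r¹ar² and S(a) = s¹as². Then (A, R, S) is a Rota-Baxter system, i.e., R(a)R(b) = R(R(a)b) + R(aS(b)) and S(a)S(b) = S(R(a)b) + S(aS(b)) for all a, b ∈ A. -/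

import Mathlib

open TensorProduct

section Defs

variable {K A : Type*} [Field K] [NonUnitalRing A] [Module K A]
  [SMulCommClass K A A] [IsScalarTower K A A]

/-- `r₁₂s₂₃ = r¹ ⊗ r²s¹ ⊗ s²`, as a linear map on `(A⊗A)⊗(A⊗A)`. -/
noncomputable def m1223 :
    (A ⊗[K] A) ⊗[K] (A ⊗[K] A) →ₗ[K] A ⊗[K] (A ⊗[K] A) :=
  TensorProduct.map LinearMap.id (TensorProduct.map (LinearMap.mul' K A) LinearMap.id) ∘ₗ
    TensorProduct.map LinearMap.id (TensorProduct.assoc K A A A).symm.toLinearMap ∘ₗ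
    (TensorProduct.assoc K A A (A ⊗[K] A)).toLinearMap

/-- `r₁₃s₁₂ = r¹s¹ ⊗ s² ⊗ r²`. -/
noncomputable def m1312 :
    (A ⊗[K] A) ⊗[K] (A ⊗[K] A) →ₗ[K] A ⊗[K] (A ⊗[K] A) :=
  TensorProduct.map (LinearMap.mul' K A)
      ((TensorProduct.comm K A A).toLinearMap) ∘ₗ
    (TensorProduct.tensorTensorTensorComm K A A A A).toLinearMap

/-- `r₂₃s₁₃ = s¹ ⊗ r¹ ⊗ r²s²`. -/
noncomputable def m2313 :
    (A ⊗[K] A) ⊗[K] (A ⊗[K] A) →ₗ[K] A ⊗[K] (A ⊗[K] A) :=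
  (TensorProduct.assoc K A A A).toLinearMap ∘ₗ
    TensorProduct.map (TensorProduct.comm K A A).toLinearMap (LinearMap.mul' K A) ∘ₗ
    (TensorProduct.tensorTensorTensorComm K A A A A).toLinearMap

/-- The operator `a ↦ r¹ a r²` attached to `r ∈ A⊗A`. -/
noncomputable def rbOp (r : A ⊗[K] A) (a : A) : A :=
  LinearMap.mul' K A (TensorProduct.map LinearMap.id (LinearMap.mulLeft K a) r)

end Defs

section Aux

variable {K A : Type*} [Field K] [NonUnitalRing A] [Module K A]
  [SMulCommClass K A A] [IsScalarTower K A A]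

/-- `x ⊗ y ⊗ z ↦ x a y b z`. -/
noncomputable def evAux (a b : A) : A ⊗[K] (A ⊗[K] A) →ₗ[K] A :=
  LinearMap.mul' K A ∘ₗ TensorProduct.map LinearMap.id
    (LinearMap.mulLeft K a ∘ₗ LinearMap.mul' K A ∘ₗ
      TensorProduct.map LinearMap.id (LinearMap.mulLeft K b))

theorem evAux_tmul (a b x y z : A) :
    evAux a b (x ⊗ₜ[K] (y ⊗ₜ[K] z)) = x * (a * (y * (b * z))) := by
  simp [evAux]

theorem rbOp_tmul (x y a : A) : rbOp (x ⊗ₜ[K] y) a = x * (a * y) := by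
  simp [rbOp]

theorem rbOp_zero_left (a : A) : rbOp (0 : A ⊗[K] A) a = 0 := by
  simp [rbOp]

theorem rbOp_add_left (r s : A ⊗[K] A) (a : A) :
    rbOp (r + s) a = rbOp r a + rbOp s a := by
  simp [rbOp]

theorem rbOp_isLinear (r : A ⊗[K] A) : IsLinearMap K (rbOp r) := by
  constructor
  · intro a b
    induction r with
    | zero => simp [rbOp_zero_left]
    | tmul x y => simp [rbOp_tmul, add_mul, mul_add]
    | add x y hx hy => rw [rbOp_add_left, rbOp_add_left, rbOp_add_left, hx, hy]; abel
  · intro c a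
    induction r with
    | zero => simp [rbOp_zero_left]
    | tmul x y => simp [rbOp_tmul, smul_mul_assoc, mul_smul_comm]
    | add x y hx hy => rw [rbOp_add_left, rbOp_add_left, hx, hy, smul_add]

theorem rbOp_zero_right (r : A ⊗[K] A) : rbOp r 0 = 0 := (rbOp_isLinear r).map_zero

theorem ev1312 (r s : A ⊗[K] A) (a b : A) :
    evAux a b (m1312 (r ⊗ₜ[K] s)) = rbOp r (rbOp s a * b) := by
  induction r with
  | zero => simp [rbOp_zero_left]
  | add x y hx hy => rw [TensorProduct.add_tmul, map_add, map_add, hx, hy, rbOp_add_left]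
  | tmul x y =>
    induction s with
    | zero => simp [rbOp_zero_left, rbOp_zero_right]
    | add u v hu hv =>
      rw [TensorProduct.tmul_add, map_add, map_add, hu, hv, rbOp_add_left, add_mul,
        (rbOp_isLinear _).map_add]
    | tmul u v => simp [m1312, evAux_tmul, rbOp_tmul, mul_assoc]

theorem ev1223 (r s : A ⊗[K] A) (a b : A) :
    evAux a b (m1223 (r ⊗ₜ[K] s)) = rbOp r a * rbOp s b := by
  induction r with
  | zero => simp [rbOp_zero_left]
  | add x y hx hy =>
    rw [TensorProduct.add_tmul, map_add, map_add, hx, hy, rbOp_add_left, add_mul]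
  | tmul x y =>
    induction s with
    | zero => simp [rbOp_zero_left]
    | add u v hu hv =>
      rw [TensorProduct.tmul_add, map_add, map_add, hu, hv, rbOp_add_left, mul_add]
    | tmul u v => simp [m1223, evAux_tmul, rbOp_tmul, mul_assoc]

theorem ev2313 (r s : A ⊗[K] A) (a b : A) :
    evAux a b (m2313 (r ⊗ₜ[K] s)) = rbOp s (a * rbOp r b) := by
  induction r with
  | zero => simp [rbOp_zero_left, rbOp_zero_right]
  | add x y hx hy =>
    rw [TensorProduct.add_tmul, map_add, map_add, hx, hy, rbOp_add_left, mul_add,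
      (rbOp_isLinear _).map_add]
  | tmul x y =>
    induction s with
    | zero => simp [rbOp_zero_left]
    | add u v hu hv =>
      rw [TensorProduct.tmul_add, map_add, map_add, hu, hv, rbOp_add_left]
    | tmul u v => simp [m2313, evAux_tmul, rbOp_tmul, mul_assoc]

end Aux

/-- Corollary 2.8, Brzeziński's Proposition 3.4: an associative
Yang-Baxter pair `(r, s)` of weight `(0, 0)` in an associative algebra `(A, μ)`
yields a Rota-Baxter system `(A, R, S)` with `R(a) = r¹ar²` and `S(a) = s¹as²`. -/
theorem stmt2 {K A : Type*} [Field K] [NonUnitalRing A] [Module K A]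
    [SMulCommClass K A A] [IsScalarTower K A A]
    (r s : A ⊗[K] A)
    -- r₁₃r₁₂ − r₁₂r₂₃ + s₂₃r₁₃ = 0
    (hYB1 : m1312 (r ⊗ₜ[K] r) - m1223 (r ⊗ₜ[K] r) + m2313 (s ⊗ₜ[K] r) = 0)
    -- s₁₃r₁₂ − s₁₂s₂₃ + s₂₃s₁₃ = 0
    (hYB2 : m1312 (s ⊗ₜ[K] r) - m1223 (s ⊗ₜ[K] s) + m2313 (s ⊗ₜ[K] s) = 0) :
    -- conclusion: (A, R, S) is a Rota-Baxter system
    IsLinearMap K (rbOp r) ∧ IsLinearMap K (rbOp s) ∧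
    (∀ a b, rbOp r a * rbOp r b = rbOp r (rbOp r a * b) + rbOp r (a * rbOp s b)) ∧
    (∀ a b, rbOp s a * rbOp s b = rbOp s (rbOp r a * b) + rbOp s (a * rbOp s b)) := by
  refine ⟨rbOp_isLinear r, rbOp_isLinear s, fun a b => ?_, fun a b => ?_⟩
  · have h := congrArg (evAux a b) hYB1
    rw [map_add, map_sub, ev1312, ev1223, ev2313, map_zero] at h
    rw [← sub_eq_zero, ← neg_eq_zero, ← h]
    abel
  · have h := congrArg (evAux a b) hYB2
    rw [map_add, map_sub, ev1312, ev1223, ev2313, map_zero] at h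
    rw [← sub_eq_zero, ← neg_eq_zero, ← h]
    abel
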